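/- Let κ > 0, h > 0, and let G : (0, ∞) → [0, 1] be nonincreasing. Define r(t) = e^{κt} G(e^t) for t ∈ ℝ and ř(x) = ∫_{−∞}^{x} e^{−(x−t)} r(t) dt, assumed finite for every x ∈ ℝ. Suppose that for every x ∈ ℝ the sequence ř(x + nh) converges as n → ∞ to a limit d(x) ∈ (0, ∞) (so that d is h-periodic). Then for all x, y ∈ ℝ with y < x + h: (a) ř(x+h) − e^{y−x−h} ř(y) = e^{−(x+h)} ∫_{e^y}^{e^{x+h}} u^κ G(u) du; (b) liminf_{n→∞} e^{(y+nh)κ} G(e^{y+nh}) ≥ e^{−(x+h−y)κ} (1 − e^{y−x−h})^{−1} [d(x) − e^{y−x−h} d(y)]; (c) limsup_{n→∞} e^{(x+nh)κ} G(e^{x+nh}) ≤ e^{(x+h−y)κ} (1 − e^{y−x−h})^{−1} [d(x) − e^{y−x−h} d(y)]. -/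

import Mathlib

open MeasureTheory Filter

/-- Change of variables plus difference of two truncated integrals. -/
lemma aux_a (κ : ℝ) (G r rc : ℝ → ℝ)
    (hr : ∀ t, r t = Real.exp (κ * t) * G (Real.exp t))
    (hrc : ∀ x, rc x = ∫ t in Set.Iio x, Real.exp (-(x - t)) * r t)
    (hint : ∀ x, IntegrableOn (fun t => Real.exp (-(x - t)) * r t) (Set.Iio x))
    (X y : ℝ) (hy : y < X) :
    rc X - Real.exp (y - X) * rc y = (∫ t in Set.Ico y X, Real.exp (-(X - t)) * r t) ∧
    (∫ t in Set.Ico y X, Real.exp (-(X - t)) * r t) =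
      Real.exp (-X) * ∫ u in Real.exp y..Real.exp X, u ^ κ * G u := by
  constructor
  · have h1 : Real.exp (y - X) * rc y = ∫ t in Set.Iio y, Real.exp (-(X - t)) * r t := by
      rw [hrc y, ← integral_const_mul]
      congr 1
      ext t
      rw [← mul_assoc, ← Real.exp_add]
      congr 2
      ring
    have h2 : Set.Iio X = Set.Iio y ∪ Set.Ico y X := (Set.Iio_union_Ico_eq_Iio hy.le).symm
    have hi := hint X
    rw [h1, hrc X, h2, setIntegral_union]
    · ring
    · rw [Set.disjoint_left]
      intro t ht ht2
      exact absurd ht2.1 (not_le.mpr ht)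
    · exact measurableSet_Ico
    · exact hi.mono_set (Set.Iio_subset_Iio hy.le)
    · exact hi.mono_set Set.Ico_subset_Iio_self
  · have him : Real.exp '' Set.Icc y X = Set.Icc (Real.exp y) (Real.exp X) := by
      ext u
      constructor
      · rintro ⟨t, ht, rfl⟩
        exact ⟨Real.exp_le_exp.mpr ht.1, Real.exp_le_exp.mpr ht.2⟩
      · intro hu
        have hu0 : 0 < u := (Real.exp_pos y).trans_le hu.1
        exact ⟨Real.log u, ⟨(Real.le_log_iff_exp_le hu0).mpr hu.1,
          (Real.log_le_iff_le_exp hu0).mpr hu.2⟩, Real.exp_log hu0⟩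
    rw [intervalIntegral.integral_of_le (Real.exp_le_exp.mpr hy.le),
      ← integral_Icc_eq_integral_Ioc, ← him,
      integral_image_eq_integral_abs_deriv_smul measurableSet_Icc
        (fun t _ => (Real.hasDerivAt_exp t).hasDerivWithinAt) Real.exp_injective.injOn,
      integral_Icc_eq_integral_Ico, ← integral_const_mul]
    congr 1
    ext t
    rw [hr, abs_of_pos (Real.exp_pos t), smul_eq_mul, ← Real.exp_mul,
      show -(X - t) = -X + t by ring, Real.exp_add, mul_comm t κ]
    ring

lemma aux_bd (κ : ℝ) (hκ : 0 < κ)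
    (G : ℝ → ℝ) (hGmono : ∀ u v : ℝ, 0 < u → u ≤ v → G v ≤ G u)
    (hG01 : ∀ u : ℝ, 0 < u → G u ∈ Set.Icc (0 : ℝ) 1)
    (r : ℝ → ℝ) (hr : ∀ t, r t = Real.exp (κ * t) * G (Real.exp t))
    (rc : ℝ → ℝ)
    (hrc : ∀ x, rc x = ∫ t in Set.Iio x, Real.exp (-(x - t)) * r t)
    (hint : ∀ x, IntegrableOn (fun t => Real.exp (-(x - t)) * r t) (Set.Iio x))
    (X y : ℝ) (hy : y < X) :
    Real.exp (-((X - y) * κ)) * (1 - Real.exp (y - X))⁻¹ * (rc X - Real.exp (y - X) * rc y)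
      ≤ Real.exp (y * κ) * G (Real.exp y) ∧
    Real.exp (X * κ) * G (Real.exp X) ≤
    Real.exp ((X - y) * κ) * (1 - Real.exp (y - X))⁻¹ * (rc X - Real.exp (y - X) * rc y) := by
  have hq : 0 < 1 - Real.exp (y - X) := by
    have : Real.exp (y - X) < 1 := by
      rw [← Real.exp_zero]
      exact Real.exp_lt_exp.mpr (by linarith)
    linarith
  have hI : ∫ t in Set.Ico y X, Real.exp (-(X - t)) = 1 - Real.exp (y - X) := by
    rw [integral_Ico_eq_integral_Ioc, ← intervalIntegral.integral_of_le hy.le]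
    have : ∀ t ∈ Set.uIcc y X, HasDerivAt (fun t => Real.exp (-(X - t)))
        (Real.exp (-(X - t))) t := by
      intro t _
      have := (((hasDerivAt_id t).const_sub X).neg).exp
      simpa using this
    rw [intervalIntegral.integral_eq_sub_of_hasDerivAt this
      (Continuous.intervalIntegrable (by fun_prop) _ _)]
    simp
  have hci : ∀ c : ℝ, IntegrableOn (fun t => Real.exp (-(X - t)) * c) (Set.Ico y X) := by
    intro c
    have : Continuous (fun t => Real.exp (-(X - t)) * c) := by fun_prop
    exact (this.integrableOn_Icc (a := y) (b := X)).mono_set Set.Ico_subset_Icc_self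
  have hri : IntegrableOn (fun t => Real.exp (-(X - t)) * r t) (Set.Ico y X) :=
    (hint X).mono_set Set.Ico_subset_Iio_self
  have hJ := (aux_a κ G r rc hr hrc hint X y hy).1
  have hup : rc X - Real.exp (y - X) * rc y ≤
      (1 - Real.exp (y - X)) * (Real.exp (κ * X) * G (Real.exp y)) := by
    rw [hJ, ← hI, ← integral_mul_const]
    refine setIntegral_mono_on hri (hci _) measurableSet_Ico fun t ht => ?_
    rw [hr]
    have h1 := hGmono _ _ (Real.exp_pos y) (Real.exp_le_exp.mpr ht.1)
    have h2 := (hG01 _ (Real.exp_pos t)).1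
    have h3 : Real.exp (κ * t) ≤ Real.exp (κ * X) :=
      Real.exp_le_exp.mpr (mul_le_mul_of_nonneg_left ht.2.le hκ.le)
    gcongr
  have hlo : (1 - Real.exp (y - X)) * (Real.exp (κ * y) * G (Real.exp X)) ≤
      rc X - Real.exp (y - X) * rc y := by
    rw [hJ, ← hI, ← integral_mul_const]
    refine setIntegral_mono_on (hci _) hri measurableSet_Ico fun t ht => ?_
    rw [hr]
    have h1 := hGmono _ _ (Real.exp_pos t) (Real.exp_le_exp.mpr ht.2.le)
    have h2 := (hG01 _ (Real.exp_pos X)).1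
    have h3 : Real.exp (κ * y) ≤ Real.exp (κ * t) :=
      Real.exp_le_exp.mpr (mul_le_mul_of_nonneg_left ht.1 hκ.le)
    gcongr
  constructor
  · calc _ ≤ Real.exp (-((X - y) * κ)) * (1 - Real.exp (y - X))⁻¹ *
          ((1 - Real.exp (y - X)) * (Real.exp (κ * X) * G (Real.exp y))) := by gcongr
      _ = (Real.exp (-((X - y) * κ)) * Real.exp (κ * X)) * G (Real.exp y) := by
        field_simp
      _ = _ := by
        rw [← Real.exp_add]
        congr 2
        ring
  · calc Real.exp (X * κ) * G (Real.exp X)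
        = (Real.exp ((X - y) * κ) * Real.exp (κ * y)) * G (Real.exp X) := by
          rw [← Real.exp_add]
          congr 2
          ring
      _ = Real.exp ((X - y) * κ) * (1 - Real.exp (y - X))⁻¹ *
          ((1 - Real.exp (y - X)) * (Real.exp (κ * y) * G (Real.exp X))) := by
        field_simp
      _ ≤ _ := by gcongr

/-- Arithmetic-case renewal estimates. Let `κ, h > 0`, `G : (0,∞) → [0,1]` nonincreasing,
`r(t) = e^{κt} G(e^t)`, `ř(x) = ∫_{−∞}^x e^{−(x−t)} r(t) dt` (assumed finite), and suppose
`ř(x + nh) → d(x) ∈ (0,∞)` as `n → ∞` for every `x`. Then for all `y < x + h`: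
(a) `ř(x+h) − e^{y−x−h} ř(y) = e^{−(x+h)} ∫_{e^y}^{e^{x+h}} u^κ G(u) du`;
(b) `liminf_n e^{(y+nh)κ} G(e^{y+nh}) ≥ e^{−(x+h−y)κ} (1 − e^{y−x−h})⁻¹ (d(x) − e^{y−x−h} d(y))`;
(c) `limsup_n e^{(x+nh)κ} G(e^{x+nh}) ≤ e^{(x+h−y)κ} (1 − e^{y−x−h})⁻¹ (d(x) − e^{y−x−h} d(y))`. -/
theorem stmt_15 (κ h : ℝ) (hκ : 0 < κ) (hh : 0 < h)
    (G : ℝ → ℝ) (hGmono : ∀ u v : ℝ, 0 < u → u ≤ v → G v ≤ G u)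
    (hG01 : ∀ u : ℝ, 0 < u → G u ∈ Set.Icc (0 : ℝ) 1)
    (r : ℝ → ℝ) (hr : ∀ t, r t = Real.exp (κ * t) * G (Real.exp t))
    (rc : ℝ → ℝ)
    (hrc : ∀ x, rc x = ∫ t in Set.Iio x, Real.exp (-(x - t)) * r t)
    (hint : ∀ x, IntegrableOn (fun t => Real.exp (-(x - t)) * r t) (Set.Iio x))
    (d : ℝ → ℝ) (hd : ∀ x, 0 < d x)
    (hconv : ∀ x, Tendsto (fun n : ℕ => rc (x + n * h)) atTop (nhds (d x))) :
    ∀ x y : ℝ, y < x + h →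
      (rc (x + h) - Real.exp (y - x - h) * rc y =
        Real.exp (-(x + h)) * ∫ u in Real.exp y..Real.exp (x + h), u ^ κ * G u) ∧
      (atTop.liminf
          (fun n : ℕ => Real.exp ((y + n * h) * κ) * G (Real.exp (y + n * h))) ≥
        Real.exp (-((x + h - y) * κ)) * (1 - Real.exp (y - x - h))⁻¹ *
          (d x - Real.exp (y - x - h) * d y)) ∧
      (atTop.limsup
          (fun n : ℕ => Real.exp ((x + n * h) * κ) * G (Real.exp (x + n * h))) ≤
        Real.exp ((x + h - y) * κ) * (1 - Real.exp (y - x - h))⁻¹ *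
          (d x - Real.exp (y - x - h) * d y)) := by
  intro x y hxy
  have hs : y - x - h = y - (x + h) := by ring
  rw [hs]
  obtain ⟨ha1, ha2⟩ := aux_a κ G r rc hr hrc hint (x + h) y hxy
  have bd := aux_bd κ hκ G hGmono hG01 r hr rc hrc hint
  have hconv' : ∀ z, Tendsto (fun n : ℕ => rc (z + h + n * h)) atTop (nhds (d z)) := by
    intro z
    have := (tendsto_add_atTop_iff_nat 1).mpr (hconv z)
    refine this.congr fun n => ?_
    congr 1
    push_cast
    ring
  have hT : ∀ z w c : ℝ, Tendsto (fun n : ℕ => c * (1 - Real.exp (w - (z + h)))⁻¹ *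
      (rc (z + h + n * h) - Real.exp (w - (z + h)) * rc (w + n * h))) atTop
      (nhds (c * (1 - Real.exp (w - (z + h)))⁻¹ * (d z - Real.exp (w - (z + h)) * d w))) := by
    intro z w c
    exact ((hconv' z).sub ((hconv w).const_mul _)).const_mul _
  have hlow : ∀ z w : ℝ, w < z + h → ∀ n : ℕ,
      Real.exp (-((z + h - w) * κ)) * (1 - Real.exp (w - (z + h)))⁻¹ *
      (rc (z + h + n * h) - Real.exp (w - (z + h)) * rc (w + n * h)) ≤
      Real.exp ((w + n * h) * κ) * G (Real.exp (w + n * h)) := by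
    intro z w hzw n
    have := (bd (z + h + n * h) (w + n * h) (by linarith)).1
    rwa [add_sub_add_right_eq_sub, add_sub_add_right_eq_sub] at this
  have hupp : ∀ z w : ℝ, w < z + h → ∀ n : ℕ,
      Real.exp ((z + h + n * h) * κ) * G (Real.exp (z + h + n * h)) ≤
      Real.exp ((z + h - w) * κ) * (1 - Real.exp (w - (z + h)))⁻¹ *
      (rc (z + h + n * h) - Real.exp (w - (z + h)) * rc (w + n * h)) := by
    intro z w hzw n
    have := (bd (z + h + n * h) (w + n * h) (by linarith)).2
    rwa [add_sub_add_right_eq_sub, add_sub_add_right_eq_sub] at this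
  refine ⟨ha1.trans ha2, ?_, ?_⟩
  · have hT1 := hT x y (Real.exp (-((x + h - y) * κ)))
    rw [ge_iff_le, ← hT1.liminf_eq]
    refine liminf_le_liminf (Eventually.of_forall (hlow x y hxy)) hT1.isBoundedUnder_ge ?_
    have hb := (hT (y - h) (y - h) (Real.exp ((y - h + h - (y - h)) * κ))).isBoundedUnder_le
    have hb2 := hb.mono_le (Eventually.of_forall (hupp (y - h) (y - h) (by linarith)))
    simp only [sub_add_cancel] at hb2
    exact hb2.isCoboundedUnder_ge
  · have hT1 := hT x y (Real.exp ((x + h - y) * κ))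
    rw [← hT1.limsup_eq, ← limsup_nat_add _ 1]
    have he : (fun n : ℕ => Real.exp ((x + (n + 1 : ℕ) * h) * κ) *
        G (Real.exp (x + (n + 1 : ℕ) * h))) =
        fun n : ℕ => Real.exp ((x + h + n * h) * κ) * G (Real.exp (x + h + n * h)) := by
      ext n
      have : x + (n + 1 : ℕ) * h = x + h + n * h := by push_cast; ring
      rw [this]
    rw [he]
    refine limsup_le_limsup (Eventually.of_forall (hupp x y hxy)) ?_ hT1.isBoundedUnder_le
    have hb : IsBoundedUnder (· ≥ ·) atTop
        (fun n : ℕ => Real.exp ((x + h + n * h) * κ) * G (Real.exp (x + h + n * h))) :=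
      isBoundedUnder_of ⟨0, fun n =>
        mul_nonneg (Real.exp_pos _).le (hG01 _ (Real.exp_pos _)).1⟩
    exact hb.isCoboundedUnder_le
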